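/- Convolution identity for cyclotomic S-sums: let k, l ≥ 1, let a_1,…,a_k, c_1,…,c_k, d_1,…,d_l, f_1,…,f_l be positive integers, b_1,…,b_k, e_1,…,e_l nonnegative integers, x_1,…,x_k, y_1,…,y_l nonzero reals, and n ∈ ℕ. Then Σ_{i=1}^n S_{(a_1,b_1,c_1),…,(a_k,b_k,c_k)}(x_1,…,x_k; n−i) · S_{(d_2,e_2,f_2),…,(d_l,e_l,f_l)}(y_2,…,y_l; i) · y_1^i/(d_1 i + e_1)^{f_1} = Σ_{κ=1}^{f_1} binom(c_1+f_1−κ−1, c_1−1) · a_1^{f_1−κ} d_1^{c_1} · Σ_{i=1}^n ( x_1^i/(d_1 b_1 + a_1 e_1 + i·a_1 d_1)^{c_1+f_1−κ} · Σ_{j=1}^{i−1} S_{(a_2,b_2,c_2),…,(a_k,b_k,c_k)}(x_2,…,x_k; i−j) · S_{(d_2,e_2,f_2),…,(d_l,e_l,f_l)}(y_2,…,y_l; j) · (y_1/x_1)^j/(d_1 j + e_1)^{κ} ) + Σ_{κ=1}^{c_1} binom(c_1+f_1−κ−1, f_1−1) · a_1^{f_1} d_1^{c_1−κ} · Σ_{i=1}^n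 ( y_1^i/(d_1 b_1 + a_1 e_1 + i·a_1 d_1)^{c_1+f_1−κ} · Σ_{j=1}^{i−1} S_{(d_2,e_2,f_2),…,(d_l,e_l,f_l)}(y_2,…,y_l; i−j) · S_{(a_2,b_2,c_2),…,(a_k,b_k,c_k)}(x_2,…,x_k; j) · (x_1/y_1)^j/(a_1 j + b_1)^{κ} ). -/

import Mathlib

/-- Cyclotomic S-sums: `cycS [((a₁,b₁,c₁),x₁),…] n` is
`S_{(a₁,b₁,c₁),…}(x₁,…; n)`. The empty sum equals `1`. -/
noncomputable def cycS : List ((ℕ × ℤ × ℕ) × ℝ) → ℕ → ℝ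
  | [], _ => 1
  | ((a, b, c), x) :: t, n =>
      ∑ i ∈ Finset.Icc 1 n, x ^ i / ((a : ℝ) * i + (b : ℝ)) ^ c * cycS t i

lemma aux_step (s t : ℝ) (h : s + t = 1) (p q : ℕ) :
    t ^ (q + 1) * ∑ r ∈ Finset.range (p + 1), ((q + r).choose q : ℝ) * s ^ r
      - t ^ (q + 2) * ∑ r ∈ Finset.range (p + 1), ((q + 1 + r).choose (q + 1) : ℝ) * s ^ r
      = s ^ (p + 1) * (((p + (q + 1)).choose p : ℝ) * t ^ (q + 1)) := by
  have ht : t = 1 - s := by linarith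
  induction p with
  | zero => simp [ht]; ring
  | succ p ih =>
    rw [Finset.sum_range_succ, Finset.sum_range_succ (n := p + 1), mul_add, mul_add]
    have e1 : ((q + (p + 1)).choose q : ℝ) + ((p + (q + 1)).choose p : ℝ)
        = ((p + 1 + (q + 1)).choose (p + 1) : ℝ) := by
      have h1 : (q + (p + 1)).choose q = (p + (q + 1)).choose (p + 1) := by
        rw [Nat.choose_symm_add]; congr 1; omega
      have h2 : p + 1 + (q + 1) = (p + (q + 1)) + 1 := by omega
      rw [h1, h2, Nat.choose_succ_succ]; push_cast; ring
    have e2 : ((q + 1 + (p + 1)).choose (q + 1) : ℝ)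
        = ((p + 1 + (q + 1)).choose (p + 1) : ℝ) := by
      rw [Nat.choose_symm_add, add_comm (q + 1)]
    rw [e2, ← e1]
    rw [ht] at ih ⊢
    linear_combination ih

lemma aux_one (s t : ℝ) (h : s + t = 1) (p q : ℕ) :
    s ^ (p + 1) * ∑ r ∈ Finset.range (q + 1), ((p + r).choose p : ℝ) * t ^ r
      + t ^ (q + 1) * ∑ r ∈ Finset.range (p + 1), ((q + r).choose q : ℝ) * s ^ r = 1 := by
  induction q with
  | zero =>
    have ht : t = 1 - s := by linarith
    have := mul_neg_geom_sum s (p + 1)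
    simp [ht]
    linarith
  | succ q ih =>
    rw [Finset.sum_range_succ]
    linear_combination ih - aux_step s t h p q

lemma sum_reflect_Icc (g : ℕ → ℝ) (f : ℕ) :
    ∑ κ ∈ Finset.Icc 1 (f + 1), g κ = ∑ r ∈ Finset.range (f + 1), g (f + 1 - r) := by
  rw [← Finset.sum_range_reflect, Finset.range_eq_Ico, Finset.sum_Ico_eq_sum_range]
  rw [← Finset.Ico_add_one_right_eq_Icc, Finset.sum_Ico_eq_sum_range]
  apply Finset.sum_congr rfl
  intro r hr
  rw [Finset.mem_range] at hr
  congr 1; omega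

lemma aux_half (D a d N : ℝ) (hD : D ≠ 0) (ha : a ≠ 0) (hN : N ≠ 0) (A : ℝ) (hA : A ≠ 0)
    (p q : ℕ) :
    ∑ κ ∈ Finset.Icc 1 (q + 1), ((p + 1 + (q + 1) - κ - 1).choose p : ℝ) * a ^ (q + 1 - κ)
        * d ^ (p + 1) * (1 / N ^ (p + 1 + (q + 1) - κ) * (1 / D ^ κ))
    = (1 / (A ^ (p + 1) * D ^ (q + 1))) * ((d * A / N) ^ (p + 1) *
        ∑ r ∈ Finset.range (q + 1), ((p + r).choose p : ℝ) * (a * D / N) ^ r) := by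
  rw [sum_reflect_Icc, Finset.mul_sum, Finset.mul_sum]
  apply Finset.sum_congr rfl
  intro r hr
  rw [Finset.mem_range] at hr
  obtain ⟨m, rfl⟩ : ∃ m, q = r + m := ⟨q - r, by omega⟩
  have h1 : p + 1 + (r + m + 1) - (r + m + 1 - r) - 1 = p + r := by omega
  have h2 : r + m + 1 - (r + m + 1 - r) = r := by omega
  have h3 : p + 1 + (r + m + 1) - (r + m + 1 - r) = p + 1 + r := by omega
  have h4 : r + m + 1 - r = m + 1 := by omega
  rw [h1, h2, h3, h4, div_pow, div_pow, mul_pow, mul_pow]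
  rw [pow_add N, add_assoc r m 1, pow_add D]
  field_simp
  ring

lemma aux_pf (A D a d N : ℝ) (hA : A ≠ 0) (hD : D ≠ 0) (ha : a ≠ 0) (hd : d ≠ 0) (hN : N ≠ 0)
    (h : d * A + a * D = N) (c f : ℕ) (hc : 0 < c) (hf : 0 < f) :
    1 / (A ^ c * D ^ f) =
      ∑ κ ∈ Finset.Icc 1 f, ((c + f - κ - 1).choose (c - 1) : ℝ) * a ^ (f - κ)
        * d ^ c * (1 / N ^ (c + f - κ) * (1 / D ^ κ))
      + ∑ κ ∈ Finset.Icc 1 c, ((c + f - κ - 1).choose (f - 1) : ℝ) * a ^ f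
        * d ^ (c - κ) * (1 / N ^ (c + f - κ) * (1 / A ^ κ)) := by
  obtain ⟨p, rfl⟩ : ∃ p, c = p + 1 := ⟨c - 1, by omega⟩
  obtain ⟨q, rfl⟩ : ∃ q, f = q + 1 := ⟨f - 1, by omega⟩
  have k1 := aux_half D a d N hD ha hN A hA p q
  have k2 := aux_half A d a N hA hd hN D hD q p
  have k := aux_one (d * A / N) (a * D / N) (by rw [← add_div, h, div_self hN]) p q
  have e : ∑ κ ∈ Finset.Icc 1 (p + 1), ((p + 1 + (q + 1) - κ - 1).choose (q + 1 - 1) : ℝ)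
        * a ^ (q + 1)
        * d ^ (p + 1 - κ) * (1 / N ^ (p + 1 + (q + 1) - κ) * (1 / A ^ κ))
      = ∑ κ ∈ Finset.Icc 1 (p + 1), ((q + 1 + (p + 1) - κ - 1).choose q : ℝ) * d ^ (p + 1 - κ)
        * a ^ (q + 1) * (1 / N ^ (q + 1 + (p + 1) - κ) * (1 / A ^ κ)) := by
    apply Finset.sum_congr rfl
    intro κ _
    rw [add_comm (p + 1) (q + 1), Nat.add_sub_cancel]
    ring
  rw [e, k2, Nat.add_sub_cancel, k1, mul_comm (D ^ (q + 1)), ← mul_add, k, mul_one]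

lemma aux_tri (g : ℕ → ℕ → ℝ) (n : ℕ) :
    ∑ i ∈ Finset.Icc 1 n, ∑ j ∈ Finset.Icc 1 (n - i), g i j
      = ∑ m ∈ Finset.Icc 1 n, ∑ j ∈ Finset.Icc 1 (m - 1), g j (m - j) := by
  rw [Finset.sum_sigma', Finset.sum_sigma']
  refine Finset.sum_bij' (fun z _ => ⟨z.1 + z.2, z.1⟩) (fun z _ => ⟨z.2, z.1 - z.2⟩) ?_ ?_ ?_ ?_ ?_
  · rintro ⟨i, j⟩ h; simp only [Finset.mem_sigma, Finset.mem_Icc] at h ⊢; omega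
  · rintro ⟨i, j⟩ h; simp only [Finset.mem_sigma, Finset.mem_Icc] at h ⊢; omega
  · rintro ⟨i, j⟩ h; simp
  · rintro ⟨i, j⟩ h
    simp only [Finset.mem_sigma, Finset.mem_Icc] at h
    have : j + (i - j) = i := by omega
    simp [this]
  · rintro ⟨i, j⟩ h; simp

lemma aux_refl (g : ℕ → ℝ) (m : ℕ) :
    ∑ j ∈ Finset.Icc 1 (m - 1), g j = ∑ j ∈ Finset.Icc 1 (m - 1), g (m - j) := by
  refine Finset.sum_bij' (fun j _ => m - j) (fun j _ => m - j) ?_ ?_ ?_ ?_ ?_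
  · intro j h; simp only [Finset.mem_Icc] at h ⊢; omega
  · intro j h; simp only [Finset.mem_Icc] at h ⊢; omega
  · intro j h; simp only [Finset.mem_Icc] at h; omega
  · intro j h; simp only [Finset.mem_Icc] at h; omega
  · intro j h
    simp only [Finset.mem_Icc] at h
    have : m - (m - j) = j := by omega
    rw [this]

/-- Convolution identity for cyclotomic S-sums. -/
theorem cycS_convolution
    (a₁ c₁ d₁ f₁ b₁ e₁ : ℕ) (x₁ y₁ : ℝ)
    (t₁ t₂ : List ((ℕ × ℤ × ℕ) × ℝ)) (n : ℕ)
    (ha₁ : 0 < a₁) (hc₁ : 0 < c₁) (hd₁ : 0 < d₁) (hf₁ : 0 < f₁)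
    (hx₁ : x₁ ≠ 0) (hy₁ : y₁ ≠ 0)
    (ht₁ : ∀ p ∈ t₁, 0 < p.1.1 ∧ 0 ≤ p.1.2.1 ∧ 0 < p.1.2.2 ∧ p.2 ≠ 0)
    (ht₂ : ∀ p ∈ t₂, 0 < p.1.1 ∧ 0 ≤ p.1.2.1 ∧ 0 < p.1.2.2 ∧ p.2 ≠ 0) :
    ∑ i ∈ Finset.Icc 1 n,
        cycS (((a₁, (b₁ : ℤ), c₁), x₁) :: t₁) (n - i) * cycS t₂ i *
          (y₁ ^ i / ((d₁ : ℝ) * i + (e₁ : ℝ)) ^ f₁) =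
      (∑ κ ∈ Finset.Icc 1 f₁, (Nat.choose (c₁ + f₁ - κ - 1) (c₁ - 1) : ℝ) *
          (a₁ : ℝ) ^ (f₁ - κ) * (d₁ : ℝ) ^ c₁ *
          ∑ i ∈ Finset.Icc 1 n,
            x₁ ^ i / ((d₁ : ℝ) * (b₁ : ℝ) + (a₁ : ℝ) * (e₁ : ℝ) +
                (i : ℝ) * (a₁ : ℝ) * (d₁ : ℝ)) ^ (c₁ + f₁ - κ) *
              ∑ j ∈ Finset.Icc 1 (i - 1),
                cycS t₁ (i - j) * cycS t₂ j *
                  ((y₁ / x₁) ^ j / ((d₁ : ℝ) * j + (e₁ : ℝ)) ^ κ))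
      + ∑ κ ∈ Finset.Icc 1 c₁, (Nat.choose (c₁ + f₁ - κ - 1) (f₁ - 1) : ℝ) *
          (a₁ : ℝ) ^ f₁ * (d₁ : ℝ) ^ (c₁ - κ) *
          ∑ i ∈ Finset.Icc 1 n,
            y₁ ^ i / ((d₁ : ℝ) * (b₁ : ℝ) + (a₁ : ℝ) * (e₁ : ℝ) +
                (i : ℝ) * (a₁ : ℝ) * (d₁ : ℝ)) ^ (c₁ + f₁ - κ) *
              ∑ j ∈ Finset.Icc 1 (i - 1),
                cycS t₂ (i - j) * cycS t₁ j *
                  ((x₁ / y₁) ^ j / ((a₁ : ℝ) * j + (b₁ : ℝ)) ^ κ) := by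
  have key : ∀ i ∈ Finset.Icc 1 n,
      cycS (((a₁, (b₁ : ℤ), c₁), x₁) :: t₁) (n - i) * cycS t₂ i *
          (y₁ ^ i / ((d₁ : ℝ) * i + (e₁ : ℝ)) ^ f₁)
      = ∑ j ∈ Finset.Icc 1 (n - i), x₁ ^ j / ((a₁ : ℝ) * j + (b₁ : ℝ)) ^ c₁ * cycS t₁ j
          * cycS t₂ i * (y₁ ^ i / ((d₁ : ℝ) * i + (e₁ : ℝ)) ^ f₁) := by
    intro i _
    rw [cycS, Finset.sum_mul, Finset.sum_mul]
    simp
  rw [Finset.sum_congr rfl key]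
  rw [aux_tri (fun i j => x₁ ^ j / ((a₁ : ℝ) * j + (b₁ : ℝ)) ^ c₁ * cycS t₁ j
          * cycS t₂ i * (y₁ ^ i / ((d₁ : ℝ) * i + (e₁ : ℝ)) ^ f₁))]
  simp_rw [Finset.mul_sum]
  rw [Finset.sum_comm (s := Finset.Icc 1 f₁), Finset.sum_comm (s := Finset.Icc 1 c₁),
    ← Finset.sum_add_distrib]
  apply Finset.sum_congr rfl
  intro m hm
  rw [Finset.sum_comm (s := Finset.Icc 1 f₁), Finset.sum_comm (s := Finset.Icc 1 c₁)]
  rw [aux_refl (fun j => ∑ κ ∈ Finset.Icc 1 c₁, _) m, ← Finset.sum_add_distrib]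
  apply Finset.sum_congr rfl
  intro j hj
  simp only [Finset.mem_Icc] at hj
  obtain ⟨r, rfl⟩ : ∃ r, m = j + r := ⟨m - j, by omega⟩
  have hr : 0 < r := by omega
  have hj0 : 0 < j := by omega
  have h1 : j + r - j = r := by omega
  have h2 : j + r - r = j := by omega
  simp only [h1, h2]
  have a0 : (0 : ℝ) < a₁ := by exact_mod_cast ha₁
  have d0 : (0 : ℝ) < d₁ := by exact_mod_cast hd₁
  have r0 : (0 : ℝ) < r := by exact_mod_cast hr
  have j0 : (0 : ℝ) < j := by exact_mod_cast hj0
  have hA : (0 : ℝ) < (a₁ : ℝ) * r + (b₁ : ℝ) := by positivity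
  have hD : (0 : ℝ) < (d₁ : ℝ) * j + (e₁ : ℝ) := by positivity
  have hN : (0 : ℝ) < (d₁ : ℝ) * (b₁ : ℝ) + (a₁ : ℝ) * (e₁ : ℝ) +
                ((j + r : ℕ) : ℝ) * (a₁ : ℝ) * (d₁ : ℝ) := by push_cast; positivity
  have pf := aux_pf _ _ (a₁ : ℝ) (d₁ : ℝ) _ hA.ne' hD.ne' a0.ne' d0.ne' hN.ne'
    (by push_cast; ring) c₁ f₁ hc₁ hf₁
  have L : x₁ ^ r / ((a₁ : ℝ) * r + (b₁ : ℝ)) ^ c₁ * cycS t₁ r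
          * cycS t₂ j * (y₁ ^ j / ((d₁ : ℝ) * j + (e₁ : ℝ)) ^ f₁)
      = x₁ ^ r * y₁ ^ j * cycS t₁ r * cycS t₂ j *
        (1 / (((a₁ : ℝ) * r + (b₁ : ℝ)) ^ c₁ * ((d₁ : ℝ) * j + (e₁ : ℝ)) ^ f₁)) := by
    field_simp
  have ex : x₁ ^ (j + r) * (y₁ / x₁) ^ j = x₁ ^ r * y₁ ^ j := by
    rw [div_pow, pow_add]; field_simp
  have ey : y₁ ^ (j + r) * (x₁ / y₁) ^ r = x₁ ^ r * y₁ ^ j := by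
    rw [div_pow, pow_add]; field_simp
  rw [L, pf, mul_add, Finset.mul_sum, Finset.mul_sum]
  congr 1
  · apply Finset.sum_congr rfl
    intro κ _
    rw [← ex]
    ring
  · apply Finset.sum_congr rfl
    intro κ _
    rw [← ey]
    ring
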